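/- Let Ω, Ω′ ⊂ ℂ be planar domains and let φ : Ω → Ω′ be a C¹ K-quasiconformal homeomorphism. Then for every disc D(z₀,r) with D(z₀,2r) ⊂ Ω and every σ > 2 such that ν := 10^{4σ}·((σ−2)/(σ−1))·(24π²K)^σ < 1, the inequality ((1/|D(z₀,r)|) ∬_{D(z₀,r)} ‖Dφ(z)‖^σ dxdy)^{1/σ} ≤ C_σ · ((1/|D(z₀,2r)|) ∬_{D(z₀,2r)} ‖Dφ(z)‖² dxdy)^{1/2} holds with C_σ = 10⁶/[(σ−1)(1−ν)]^{1/σ}. -/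

import Mathlib

open MeasureTheory Metric Real
open scoped ENNReal NNReal

/-- A `C¹` `K`-quasiconformal homeomorphism of a planar domain `Ω` onto `Ω′`:
a `C¹` homeomorphism whose Jacobian determinant is everywhere positive on `Ω`
and whose differential satisfies `‖Dφ(z)‖² ≤ K·J(z,φ)` on `Ω`. -/
def IsC1QCHomeoOn (K : ℝ) (φ : ℂ → ℂ) (Ω Ω' : Set ℂ) : Prop :=
  IsOpen Ω ∧ IsConnected Ω ∧ IsOpen Ω' ∧ IsConnected Ω' ∧
  ContDiffOn ℝ 1 φ Ω ∧ Set.InjOn φ Ω ∧ φ '' Ω = Ω' ∧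
  ∀ z ∈ Ω, 0 < (fderiv ℝ φ z).det ∧ ‖fderiv ℝ φ z‖ ^ 2 ≤ K * (fderiv ℝ φ z).det

/-!
A quasiconformal map is open, so the image of a disc lies in the disc about any image point of the
boundary circle whose radius is the length of the image of that circle. Comparing areas, averaging
over concentric circles and using `‖Dφ‖² ≤ K J` gives the weak reverse Hölder inequality
`⨍_{B_ρ} ‖Dφ‖² ≤ (4π√K ⨍_{B_{2ρ}} ‖Dφ‖)²`.

Gehring's argument improves the exponent. Around each point of a high superlevel set `{g > t}` of
`g = ‖Dφ‖`, pick a ball at whose scale the average of `g²` drops below `t²`; a Vitali selection of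
these balls bounds `∫_{g > t} g²` by `t ∫_{2bg > t} g`. Integrating against `t ^ (σ - 3) dt` bounds
`∫_{B_s} g ^ σ` by a low-level term plus a multiple, proportional to `(σ - 2) / (σ - 1)`, of
`∫_{B_R} g ^ σ`. As `ν < 1`, the multiple is small enough to be absorbed by iterating over radii
increasing from `r` to `3r / 2`.
-/

lemma ennreal_rpow_sub_one_mul_self {p : ℝ} (hp : 1 ≤ p) (x : ℝ≥0∞) : x ^ (p - 1) * x = x ^ p := by
  nth_rw 2 [← ENNReal.rpow_one x]
  rw [← ENNReal.rpow_add_of_nonneg _ _ (sub_nonneg.2 hp) zero_le_one, sub_add_cancel]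

section LayerCake

variable {α : Type*} {mα : MeasurableSpace α} {μ ν : Measure α} {f : α → ℝ≥0}

lemma ofReal_mul_lintegral_Ioc_rpow_sub_one {p : ℝ} (hp : 0 < p) (a : ℝ≥0) :
    ENNReal.ofReal p * ∫⁻ t in Set.Ioc 0 (a : ℝ), ENNReal.ofReal (t ^ (p - 1)) = a ^ p := by
  have hint : IntegrableOn (fun t : ℝ ↦ t ^ (p - 1)) (Set.Ioc 0 a) :=
    (intervalIntegrable_iff_integrableOn_Ioc_of_le a.2).1
      (intervalIntegral.intervalIntegrable_rpow' (by linarith))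
  have hnonneg : 0 ≤ᵐ[volume.restrict (Set.Ioc 0 (a : ℝ))] fun t : ℝ ↦ t ^ (p - 1) :=
    (ae_restrict_mem measurableSet_Ioc).mono fun t ht ↦ rpow_nonneg ht.1.le _
  rw [← ofReal_integral_eq_lintegral_ofReal hint hnonneg, ← ENNReal.ofReal_mul hp.le,
    ← intervalIntegral.integral_of_le (NNReal.coe_nonneg a), integral_rpow (.inl (by linarith))]
  simp [hp.ne', mul_div_cancel₀, ← ENNReal.ofReal_rpow_of_nonneg, hp.le]

lemma lintegral_rpow_mul_eq_lintegral_superlevel (hf : Measurable f) {w : α → ℝ≥0∞}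
    (hw : Measurable w) {p : ℝ} (hp : 0 < p) :
    ∫⁻ x, (f x : ℝ≥0∞) ^ p * w x ∂μ = ENNReal.ofReal p *
      ∫⁻ t in Set.Ioi (0 : ℝ), (∫⁻ x in {x | t < f x}, w x ∂μ) * ENNReal.ofReal (t ^ (p - 1)) := by
  have key := lintegral_rpow_eq_lintegral_meas_lt_mul (μ.withDensity w)
    (f := fun x ↦ (f x : ℝ)) (.of_forall fun x ↦ (f x).2) hf.coe_nnreal_real.aemeasurable hp
  rw [lintegral_withDensity_eq_lintegral_mul _ hw (by fun_prop)] at key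
  convert key using 3 with x t ht
  · simp [mul_comm, ← ENNReal.ofReal_rpow_of_nonneg, hp.le]
  · funext t
    rw [withDensity_apply _ (measurableSet_lt measurable_const hf.coe_nnreal_real)]

lemma lintegral_rpow_mul_le_add_lintegral_Ioi_superlevel (hf : Measurable f) {w : α → ℝ≥0∞}
    (hw : Measurable w) {p : ℝ} (hp : 0 < p) (a : ℝ≥0) :
    ∫⁻ x, (f x : ℝ≥0∞) ^ p * w x ∂μ ≤ a ^ p * ∫⁻ x, w x ∂μ + ENNReal.ofReal p *
      ∫⁻ t in Set.Ioi (a : ℝ), (∫⁻ x in {x | t < f x}, w x ∂μ) * ENNReal.ofReal (t ^ (p - 1)) := by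
  rw [lintegral_rpow_mul_eq_lintegral_superlevel hf hw hp, ← Set.Ioc_union_Ioi_eq_Ioi a.2]
  grw [lintegral_union_le, mul_add]
  refine add_le_add ?_ le_rfl
  calc _ ≤ ENNReal.ofReal p *
        ∫⁻ t in Set.Ioc 0 (a : ℝ), (∫⁻ x, w x ∂μ) * ENNReal.ofReal (t ^ (p - 1)) := by
        gcongr ENNReal.ofReal p * ∫⁻ t in _, ?_ * _
        exact setLIntegral_le_lintegral _ _
    _ = _ := by
        rw [lintegral_const_mul _ (by fun_prop), mul_left_comm,
          ofReal_mul_lintegral_Ioc_rpow_sub_one hp, mul_comm]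

lemma measurable_setLIntegral_superlevel (μ : Measure α) (f : α → ℝ≥0) (w : α → ℝ≥0∞) :
    Measurable fun t : ℝ ↦ ∫⁻ x in {x | t < f x}, w x ∂μ :=
  Antitone.measurable fun _ _ hst ↦ lintegral_mono_set fun _ hx ↦ hst.trans_lt hx

lemma coe_rpow_mul_ofReal_rpow {t : ℝ≥0} (ht : 0 < t) (u v : ℝ) :
    (t : ℝ≥0∞) ^ u * ENNReal.ofReal ((t : ℝ) ^ v) = ENNReal.ofReal ((t : ℝ) ^ (u + v)) := by
  have ht' : 0 < (t : ℝ) := ht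
  rw [← ENNReal.ofReal_coe_nnreal, ENNReal.ofReal_rpow_of_pos ht',
    ← ENNReal.ofReal_mul (by positivity), ← rpow_add ht']

lemma lintegral_rpow_le_of_superlevel_le (hf : Measurable f) {q σ : ℝ} (hq : 1 < q) (hqσ : q < σ)
    {t₀ a : ℝ≥0} {c : ℝ≥0∞}
    (h : ∀ t : ℝ≥0, t₀ < t → ∫⁻ x in {x | t < f x}, (f x : ℝ≥0∞) ^ q ∂μ ≤
      c * (t : ℝ≥0∞) ^ (q - 1) * ∫⁻ x in {x | t < a * f x}, f x ∂ν) :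
    ∫⁻ x, (f x : ℝ≥0∞) ^ σ ∂μ ≤ (t₀ : ℝ≥0∞) ^ (σ - q) * ∫⁻ x, (f x : ℝ≥0∞) ^ q ∂μ +
      c * (a : ℝ≥0∞) ^ (σ - 1) * ENNReal.ofReal ((σ - q) / (σ - 1)) *
        ∫⁻ x, (f x : ℝ≥0∞) ^ σ ∂ν := by
  have hp : 0 < σ - q := sub_pos.2 hqσ
  have hσ : 0 < σ - 1 := by linarith
  set V : ℝ → ℝ≥0∞ := fun t ↦
    (∫⁻ x in {x | t < (a * f x : ℝ≥0)}, f x ∂ν) * ENNReal.ofReal (t ^ (σ - 1 - 1))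
  have hV : Measurable V := (measurable_setLIntegral_superlevel _ _ _).mul (by fun_prop)
  have cake_ν : ENNReal.ofReal (σ - 1) * ∫⁻ t in Set.Ioi 0, V t =
      (a : ℝ≥0∞) ^ (σ - 1) * ∫⁻ x, (f x : ℝ≥0∞) ^ σ ∂ν := by
    rw [← lintegral_rpow_mul_eq_lintegral_superlevel (hf.const_mul a) (by fun_prop) hσ,
      ← lintegral_const_mul _ (by fun_prop)]
    refine lintegral_congr fun x ↦ ?_
    rw [ENNReal.coe_mul, ENNReal.mul_rpow_of_nonneg _ _ hσ.le, mul_assoc,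
      ennreal_rpow_sub_one_mul_self (by linarith)]
  have superlevel_le : ∀ t ∈ Set.Ioi (t₀ : ℝ),
      (∫⁻ x in {x | t < f x}, (f x : ℝ≥0∞) ^ q ∂μ) * ENNReal.ofReal (t ^ (σ - q - 1)) ≤
        c * V t := by
    intro t ht
    lift t to ℝ≥0 using t₀.2.trans (le_of_lt ht)
    have ht₀ : t₀ < t := NNReal.coe_lt_coe.1 ht
    have hexp : q - 1 + (σ - q - 1) = σ - 1 - 1 := by ring
    simp only [V, NNReal.coe_lt_coe, ← hexp, ← coe_rpow_mul_ofReal_rpow (bot_lt_of_lt ht₀)]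
    grw [h t ht₀]
    exact le_of_eq (by ring)
  calc ∫⁻ x, (f x : ℝ≥0∞) ^ σ ∂μ
      = ∫⁻ x, (f x : ℝ≥0∞) ^ (σ - q) * (f x : ℝ≥0∞) ^ q ∂μ := by
        simp only [← ENNReal.rpow_add_of_nonneg _ _ hp.le (by linarith : 0 ≤ q), sub_add_cancel]
    _ ≤ (t₀ : ℝ≥0∞) ^ (σ - q) * ∫⁻ x, (f x : ℝ≥0∞) ^ q ∂μ +
        ENNReal.ofReal (σ - q) * ∫⁻ t in Set.Ioi 0, c * V t := by
      grw [lintegral_rpow_mul_le_add_lintegral_Ioi_superlevel hf (by fun_prop) hp t₀]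
      gcongr 2
      exact (setLIntegral_mono_ae' measurableSet_Ioi (.of_forall superlevel_le)).trans
        (lintegral_mono_set (Set.Ioi_subset_Ioi t₀.2))
    _ = _ := by
      congr 1
      have : ENNReal.ofReal (σ - q) =
          ENNReal.ofReal ((σ - q) / (σ - 1)) * ENNReal.ofReal (σ - 1) := by
        rw [← ENNReal.ofReal_mul (by positivity), div_mul_cancel₀ _ hσ.ne']
      rw [this, lintegral_const_mul _ hV, mul_assoc, mul_left_comm _ c, cake_ν]
      ring

end LayerCake

section Covering

lemma measure_le_mul_of_forall_ball_le {X : Type*} [PseudoMetricSpace X]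
    [SecondCountableTopology X] [MeasurableSpace X] [OpensMeasurableSpace X] {μ ν : Measure X}
    {S V : Set X} {R τ : ℝ} (hτ : 3 < τ) {c : ℝ≥0∞}
    (h : ∀ x ∈ S, ∃ r, 0 < r ∧ r ≤ R ∧ ball x r ⊆ V ∧ μ (ball x (τ * r)) ≤ c * ν (ball x r)) :
    μ S ≤ c * ν V := by
  choose! r hr_pos hr_le hr_sub hr_meas using h
  obtain ⟨u, huS, hu_disj, hu_cover⟩ :=
    Vitali.exists_disjoint_subfamily_covering_enlargement_ball S id r R hr_le τ hτ
  have hu_count : u.Countable := hu_disj.countable_of_isOpen (fun _ _ ↦ isOpen_ball)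
    fun x hx ↦ nonempty_ball.2 (hr_pos x (huS hx))
  have hS_sub : S ⊆ ⋃ x ∈ u, ball x (τ * r x) := fun x hx ↦
    have ⟨y, hy, hxy⟩ := hu_cover x hx
    Set.mem_biUnion hy (hxy (mem_ball_self (hr_pos x hx)))
  calc μ S ≤ ∑' x : u, μ (ball (x : X) (τ * r x)) :=
        (measure_mono hS_sub).trans (measure_biUnion_le _ hu_count _)
    _ ≤ ∑' x : u, c * ν (ball (x : X) (r x)) :=
        ENNReal.tsum_le_tsum fun x ↦ hr_meas x (huS x.2)
    _ = c * ν (⋃ x ∈ u, ball x (r x)) := by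
        rw [ENNReal.tsum_mul_left]
        exact congrArg _ (measure_biUnion hu_count hu_disj fun _ _ ↦ measurableSet_ball).symm
    _ ≤ c * ν V := by
        gcongr
        exact Set.iUnion₂_subset fun x hx ↦ hr_sub x (huS hx)

end Covering

section StoppingRadius

open Filter Topology

lemma le_setLAverage_of_forall_le {α : Type*} {mα : MeasurableSpace α} {μ : Measure α}
    {f : α → ℝ≥0∞} {s : Set α} (hs : MeasurableSet s) (hs₀ : μ s ≠ 0) (hs_top : μ s ≠ ∞)
    {c : ℝ≥0∞} (h : ∀ x ∈ s, c ≤ f x) : c ≤ ⨍⁻ x in s, f x ∂μ := by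
  rw [setLAverage_eq, ENNReal.le_div_iff_mul_le (.inl hs₀) (.inl hs_top), ← setLIntegral_const]
  exact setLIntegral_mono' hs h

lemma exists_ball_le_setLAverage_lt {X : Type*} [PseudoMetricSpace X] [ProperSpace X]
    [MeasurableSpace X] [OpensMeasurableSpace X] {μ : Measure X} [μ.IsOpenPosMeasure]
    [IsFiniteMeasureOnCompacts μ] {f : X → ℝ≥0∞} {x : X} {c : ℝ≥0∞} {l R : ℝ} (hl : 1 < l)
    (hR : 0 < R) (hf : ∀ᶠ z in 𝓝 x, c ≤ f z) (havg : ⨍⁻ z in ball x R, f z ∂μ < c) :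
    ∃ ρ, 0 < ρ ∧ l * ρ ≤ R ∧ c ≤ ⨍⁻ z in ball x ρ, f z ∂μ ∧
      ⨍⁻ z in ball x (l * ρ), f z ∂μ < c := by
  have hl_pos : 0 < l := one_pos.trans hl
  let radius (k : ℕ) : ℝ := R / l ^ k
  have radius_pos (k : ℕ) : 0 < radius k := div_pos hR (pow_pos hl_pos k)
  have le_average : ∃ k, c ≤ ⨍⁻ z in ball x (radius k), f z ∂μ := by
    obtain ⟨δ, hδ, hfδ⟩ := eventually_nhds_iff_ball.1 hf
    have hlim : Tendsto radius atTop (𝓝 0) :=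
      (tendsto_pow_atTop_atTop_of_one_lt hl).const_div_atTop R
    obtain ⟨k, hk⟩ := (hlim.eventually_le_const hδ).exists
    exact ⟨k, le_setLAverage_of_forall_le measurableSet_ball
      (measure_ball_pos μ x (radius_pos k)).ne' measure_ball_lt_top.ne
      fun z hz ↦ hfδ z (ball_subset_ball hk hz)⟩
  classical
  obtain ⟨k, hk⟩ : ∃ k, Nat.find le_average = k + 1 :=
    Nat.exists_eq_succ_of_ne_zero fun h₀ ↦
      havg.not_ge (by simpa [h₀, radius] using Nat.find_spec le_average)
  have hk_mul : l * radius (k + 1) = radius k := by simp only [radius]; field_simp; ring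
  refine ⟨radius (k + 1), radius_pos _, ?_, hk ▸ Nat.find_spec le_average, ?_⟩
  · exact hk_mul ▸ div_le_self hR.le (one_le_pow₀ hl.le)
  · exact hk_mul ▸ not_le.1 (Nat.find_min le_average (hk ▸ k.lt_succ_self))

end StoppingRadius

section ReverseHolder

/-- The weak reverse Hölder inequality, with exponent `q` and constant `b`, for a function `g` on
the balls whose concentric double lies in `U`. It is stated without taking `q`-th roots. -/
def WeakReverseHolder {E : Type*} [PseudoMetricSpace E] [MeasurableSpace E] (μ : Measure E) (q : ℝ)
    (b : ℝ≥0) (g : E → ℝ≥0) (U : Set E) : Prop :=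
  ∀ x ρ, 0 < ρ → ball x (2 * ρ) ⊆ U →
    ⨍⁻ z in ball x ρ, (g z : ℝ≥0∞) ^ q ∂μ ≤ (b * ⨍⁻ z in ball x (2 * ρ), g z ∂μ) ^ q

lemma WeakReverseHolder.mono {E : Type*} [PseudoMetricSpace E] [MeasurableSpace E] {μ : Measure E}
    {q : ℝ} {b : ℝ≥0} {g : E → ℝ≥0} {U V : Set E}
    (h : WeakReverseHolder μ q b g V) (hUV : U ⊆ V) : WeakReverseHolder μ q b g U :=
  fun x ρ hρ hU ↦ h x ρ hρ (hU.trans hUV)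

lemma mul_measure_le_of_le_mul_setLAverage {α : Type*} {mα : MeasurableSpace α} {μ : Measure α}
    {f : α → ℝ≥0} (hf : Measurable f) {s : Set α} (hs : μ s ≠ ∞) {t b : ℝ≥0}
    (h : (t : ℝ≥0∞) ≤ b * ⨍⁻ x in s, f x ∂μ) :
    t * μ s ≤ 2 * b * ∫⁻ x in s ∩ {x | t < 2 * b * f x}, f x ∂μ := by
  set F : Set α := {x | t < 2 * b * f x}
  have hF : MeasurableSet F := measurableSet_lt measurable_const (hf.const_mul _)
  have h_low : 2 * b * ∫⁻ x in s \ F, f x ∂μ ≤ t * μ s := by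
    rw [← lintegral_const_mul _ hf.coe_nnreal_ennreal]
    calc _ ≤ ∫⁻ _ in s \ F, t ∂μ := by
          rw [Set.sdiff_eq, Set.inter_comm, ← Measure.restrict_restrict hF.compl]
          refine setLIntegral_mono' hF.compl fun x hx ↦ ?_
          have hx' : ¬t < 2 * b * f x := hx
          exact_mod_cast not_lt.1 hx'
      _ ≤ _ := by
          rw [setLIntegral_const]
          gcongr
          exact Set.sdiff_subset
  have h_total : t * μ s + t * μ s ≤ 2 * b * ∫⁻ x in s ∩ F, f x ∂μ + t * μ s := by
    calc t * μ s + t * μ s = 2 * (t * μ s) := (two_mul _).symm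
      _ ≤ 2 * (b * (⨍⁻ x in s, f x ∂μ) * μ s) := by gcongr
      _ = 2 * b * (∫⁻ x in s ∩ F, f x ∂μ + ∫⁻ x in s \ F, f x ∂μ) := by
          rw [lintegral_inter_add_sdiff _ _ hF, ← measure_mul_setLAverage _ hs]
          ring
      _ ≤ _ := by
          rw [mul_add]
          gcongr
  exact (ENNReal.add_le_add_iff_right (ENNReal.mul_ne_top ENNReal.coe_ne_top hs)).1 h_total

variable {E : Type*} [NormedAddCommGroup E] [NormedSpace ℝ E] [FiniteDimensional ℝ E]
  [MeasurableSpace E] [BorelSpace E] {μ : Measure E} [μ.IsAddHaarMeasure]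

lemma addHaar_ball_mul_measure (μ : Measure E) [μ.IsAddHaarMeasure] (x y : E) {l : ℝ} (hl : 0 < l)
    (ρ : ℝ) : μ (ball x (l * ρ)) =
      ENNReal.ofReal l ^ Module.finrank ℝ E * μ (ball y ρ) := by
  rw [Measure.addHaar_ball_mul_of_pos _ _ hl, ENNReal.ofReal_pow hl.le,
    Measure.addHaar_ball_center μ y]

lemma setLIntegral_rpow_lt_top_of_isCompact {X : Type*} [TopologicalSpace X] [MeasurableSpace X]
    {μ : Measure X} [IsFiniteMeasureOnCompacts μ] {g : X → ℝ≥0} {s : Set X} (hs : IsCompact s)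
    (hg : ContinuousOn g s) {p : ℝ} (hp : 0 ≤ p) : ∫⁻ x in s, (g x : ℝ≥0∞) ^ p ∂μ < ∞ := by
  simp only [← ENNReal.coe_rpow_of_nonneg _ hp]
  refine setLIntegral_lt_top_of_bddAbove hs.measure_ne_top (hs.bddAbove_image ?_)
  exact (NNReal.continuous_rpow_const hp).comp_continuousOn hg

/-- The factor in front of the integral of `g ^ σ` that is left on the right-hand side when the
good-`λ` inequality for a weak reverse Hölder function with exponent `q` and constant `b` in
dimension `d` is integrated against `t ^ (σ - q - 1)`. It tends to `0` as `σ` decreases to `q`. -/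
noncomputable def absorptionFactor (d : ℕ) (b : ℝ≥0) (q σ : ℝ) : ℝ≥0∞ :=
  4 ^ d * (2 * b) ^ σ * ENNReal.ofReal ((σ - q) / (σ - 1))

lemma coe_rpow_mul_rpow_rpow (x y : ℝ≥0) {u v w : ℝ} (hu : 0 ≤ u) (hv : 0 ≤ v) (hw : 0 ≤ w) :
    ((x ^ u * y ^ v : ℝ≥0) : ℝ≥0∞) ^ w = (x : ℝ≥0∞) ^ (u * w) * (y : ℝ≥0∞) ^ (v * w) := by
  rw [ENNReal.coe_mul, ENNReal.coe_rpow_of_nonneg _ hu, ENNReal.coe_rpow_of_nonneg _ hv,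
    ENNReal.mul_rpow_of_nonneg _ _ hw, ENNReal.rpow_mul, ENNReal.rpow_mul]

lemma le_two_mul_of_le_mul_pow_add {X : ℕ → ℝ≥0∞} {A M γ θ : ℝ≥0∞} (hM : M ≠ ∞)
    (hX : ∀ n, X n ≤ M) (hγ : 1 ≤ γ) (hγ_top : γ ≠ ∞) (hθ : γ * θ ≤ 2⁻¹)
    (h : ∀ n, X n ≤ A * γ ^ n + θ * X (n + 1)) : X 0 ≤ 2 * A := by
  -- Weighting by `γ ^ n` makes the supremum satisfy `S ≤ A + S / 2`, in which `S` can be absorbed.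
  set S := ⨆ n, X n / γ ^ n
  have hS_top : S ≠ ∞ := by
    refine ne_top_of_le_ne_top hM (iSup_le fun n ↦ ?_)
    exact (ENNReal.div_le_of_le_mul (le_mul_of_one_le_right' (one_le_pow₀ hγ))).trans (hX n)
  have hγ_pow (n : ℕ) : γ ^ n ≠ 0 := pow_ne_zero _ (one_pos.trans_le hγ).ne'
  have hS : S ≤ A + S / 2 := by
    refine iSup_le fun n ↦ ENNReal.div_le_of_le_mul ((h n).trans ?_)
    have hX_le : X (n + 1) ≤ S * γ ^ (n + 1) :=
      (ENNReal.div_le_iff (hγ_pow _) (ENNReal.pow_ne_top hγ_top)).1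
        (le_iSup (fun n ↦ X n / γ ^ n) (n + 1))
    calc A * γ ^ n + θ * X (n + 1) ≤ A * γ ^ n + θ * (S * γ ^ (n + 1)) := by gcongr
      _ = A * γ ^ n + S * (γ * θ) * γ ^ n := by ring
      _ ≤ A * γ ^ n + S * 2⁻¹ * γ ^ n := by gcongr
      _ = (A + S / 2) * γ ^ n := by rw [ENNReal.div_eq_inv_mul]; ring
  have hS_half : S / 2 ≤ A := by
    refine (ENNReal.add_le_add_iff_right (ENNReal.div_ne_top hS_top two_ne_zero)).1 ?_
    rwa [ENNReal.add_halves]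
  calc X 0 = X 0 / γ ^ 0 := by simp
    _ ≤ S := le_iSup (fun n ↦ X n / γ ^ n) 0
    _ ≤ 2 * A := by
        rw [mul_comm]
        exact (ENNReal.div_le_iff two_ne_zero ENNReal.ofNat_ne_top).1 hS_half

namespace WeakReverseHolder

variable {q : ℝ} {b t : ℝ≥0} {g : E → ℝ≥0}

lemma lintegral_ball_le_of_stopping {x : E} {ρ : ℝ} (hq : 1 < q)
    (hg : Measurable g) (hρ : 0 < ρ) (h : WeakReverseHolder μ q b g (ball x (8 * ρ)))
    (h_ge : (t : ℝ≥0∞) ^ q ≤ ⨍⁻ z in ball x ρ, (g z : ℝ≥0∞) ^ q ∂μ)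
    (h_le : ⨍⁻ z in ball x (8 * ρ), (g z : ℝ≥0∞) ^ q ∂μ ≤ (t : ℝ≥0∞) ^ q) :
    ∫⁻ z in ball x (8 * ρ), (g z : ℝ≥0∞) ^ q ∂μ ≤
      4 ^ Module.finrank ℝ E * (2 * b) * (t : ℝ≥0∞) ^ (q - 1) *
        ∫⁻ z in ball x (2 * ρ) ∩ {z | t < 2 * b * g z}, g z ∂μ := by
  have h_avg : (t : ℝ≥0∞) ≤ b * ⨍⁻ z in ball x (2 * ρ), g z ∂μ :=
    (ENNReal.rpow_le_rpow_iff (by linarith)).1 <|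
      h_ge.trans (h x ρ hρ (ball_subset_ball (by linarith)))
  have h_ball : μ (ball x (8 * ρ)) = 4 ^ Module.finrank ℝ E * μ (ball x (2 * ρ)) := by
    rw [show 8 * ρ = 4 * (2 * ρ) by ring, addHaar_ball_mul_measure μ x x four_pos]
    norm_num
  calc _ = μ (ball x (8 * ρ)) * ⨍⁻ z in ball x (8 * ρ), (g z : ℝ≥0∞) ^ q ∂μ :=
        (measure_mul_setLAverage _ measure_ball_lt_top.ne).symm
    _ ≤ μ (ball x (8 * ρ)) * (t : ℝ≥0∞) ^ q := by gcongr
    _ = 4 ^ Module.finrank ℝ E * (t : ℝ≥0∞) ^ (q - 1) * (t * μ (ball x (2 * ρ))) := by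
        rw [h_ball, ← ennreal_rpow_sub_one_mul_self hq.le]
        ring
    _ ≤ 4 ^ Module.finrank ℝ E * (t : ℝ≥0∞) ^ (q - 1) *
        (2 * b * ∫⁻ z in ball x (2 * ρ) ∩ {z | t < 2 * b * g z}, g z ∂μ) := by
        grw [mul_measure_le_of_le_mul_setLAverage hg measure_ball_lt_top.ne h_avg]
    _ = _ := by ring

lemma lintegral_superlevel_le {z₀ : E} {s R : ℝ} (hq : 1 < q)
    (hg : Measurable g) (hgc : ContinuousOn g (ball z₀ R))
    (h : WeakReverseHolder μ q b g (ball z₀ R)) (hsR : s < R)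
    (ht : ∫⁻ z in ball z₀ R, (g z : ℝ≥0∞) ^ q ∂μ < (t : ℝ≥0∞) ^ q * μ (ball z₀ (R - s))) :
    ∫⁻ z in ball z₀ s ∩ {z | t < g z}, (g z : ℝ≥0∞) ^ q ∂μ ≤
      4 ^ Module.finrank ℝ E * (2 * b) * (t : ℝ≥0∞) ^ (q - 1) *
        ∫⁻ z in ball z₀ R ∩ {z | t < 2 * b * g z}, g z ∂μ := by
  set F : Set E := {z | t < 2 * b * g z}
  have hS : MeasurableSet (ball z₀ s ∩ {z | t < g z}) :=
    measurableSet_ball.inter (measurableSet_lt measurable_const hg)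
  have hsub : ∀ x ∈ ball z₀ s, ball x (R - s) ⊆ ball z₀ R := fun x hx ↦
    ball_subset_ball' (by linarith [mem_ball.1 hx])
  have hball (x : E) (ρ : ℝ) :
      (μ.restrict F).withDensity (fun z ↦ g z) (ball x ρ) = ∫⁻ z in ball x ρ ∩ F, g z ∂μ := by
    rw [withDensity_apply _ measurableSet_ball, Measure.restrict_restrict measurableSet_ball]
  rw [← withDensity_apply _ hS, ← hball]
  refine measure_le_mul_of_forall_ball_le (R := R - s) (τ := 4) (by norm_num) ?_
  rintro x ⟨hxs, hxt : t < g x⟩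
  have h_near : ∀ᶠ z in nhds x, (t : ℝ≥0∞) ^ q ≤ (g z : ℝ≥0∞) ^ q := by
    have hgx : ContinuousAt g x :=
      hgc.continuousAt (isOpen_ball.mem_nhds (ball_subset_ball hsR.le hxs))
    filter_upwards [hgx.eventually_const_lt hxt] with z hz
    gcongr
  have h_avg : ⨍⁻ z in ball x (R - s), (g z : ℝ≥0∞) ^ q ∂μ < (t : ℝ≥0∞) ^ q := by
    rw [setLAverage_eq]
    refine ENNReal.div_lt_of_lt_mul ((lintegral_mono_set (hsub x hxs)).trans_lt ?_)
    rwa [Measure.addHaar_ball_center μ x, ← Measure.addHaar_ball_center μ z₀]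
  obtain ⟨ρ, hρ, hρ_le, h_ge, h_lt⟩ :=
    exists_ball_le_setLAverage_lt (l := 8) (by norm_num) (sub_pos.2 hsR) h_near h_avg
  have h_sub : ball x (8 * ρ) ⊆ ball z₀ R := (ball_subset_ball hρ_le).trans (hsub x hxs)
  refine ⟨2 * ρ, by positivity, by linarith,
    (ball_subset_ball (by linarith)).trans h_sub, ?_⟩
  rw [hball, withDensity_apply _ measurableSet_ball, show 4 * (2 * ρ) = 8 * ρ by ring]
  exact (h.mono h_sub).lintegral_ball_le_of_stopping hq hg hρ h_ge h_lt.le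

lemma lintegral_rpow_ball_le {z₀ : E} {s R σ : ℝ} (hq : 1 < q) (hqσ : q < σ)
    (hg : Measurable g) (hgc : ContinuousOn g (ball z₀ R))
    (h : WeakReverseHolder μ q b g (ball z₀ R)) (hsR : s < R)
    (ht : ∫⁻ z in ball z₀ R, (g z : ℝ≥0∞) ^ q ∂μ ≤ (t : ℝ≥0∞) ^ q * μ (ball z₀ (R - s))) :
    ∫⁻ z in ball z₀ s, (g z : ℝ≥0∞) ^ σ ∂μ ≤
      (t : ℝ≥0∞) ^ (σ - q) * ∫⁻ z in ball z₀ R, (g z : ℝ≥0∞) ^ q ∂μ +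
        absorptionFactor (Module.finrank ℝ E) b q σ * ∫⁻ z in ball z₀ R, (g z : ℝ≥0∞) ^ σ ∂μ := by
  have h_superlevel (u : ℝ≥0) (hu : t < u) :
      ∫⁻ z in {z | u < g z}, (g z : ℝ≥0∞) ^ q ∂μ.restrict (ball z₀ s) ≤
        4 ^ Module.finrank ℝ E * (2 * b) * (u : ℝ≥0∞) ^ (q - 1) *
          ∫⁻ z in {z | u < 2 * b * g z}, g z ∂μ.restrict (ball z₀ R) := by
    rw [Measure.restrict_restrict (measurableSet_lt measurable_const hg),
      Measure.restrict_restrict (measurableSet_lt measurable_const (hg.const_mul _)),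
      Set.inter_comm, Set.inter_comm _ (ball z₀ R)]
    refine h.lintegral_superlevel_le hq hg hgc hsR (ht.trans_lt ?_)
    have hpos : μ (ball z₀ (R - s)) ≠ 0 := (measure_ball_pos μ z₀ (sub_pos.2 hsR)).ne'
    gcongr
    exact measure_ball_lt_top.ne
  refine (lintegral_rpow_le_of_superlevel_le hg hq hqσ h_superlevel).trans
    (add_le_add (by gcongr) (le_of_eq ?_))
  rw [absorptionFactor, ← ennreal_rpow_sub_one_mul_self (hq.trans hqσ).le]
  push_cast
  ring

lemma lintegral_rpow_ball_le_add {z₀ : E} {s R σ : ℝ} {L : ℝ≥0} (hq : 1 < q) (hqσ : q < σ)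
    (hg : Measurable g) (hgc : ContinuousOn g (ball z₀ R))
    (h : WeakReverseHolder μ q b g (ball z₀ R)) (hR : 0 < R) (hL : 0 < L) (hs : s + R / L ≤ R) :
    ∫⁻ z in ball z₀ s, (g z : ℝ≥0∞) ^ σ ∂μ ≤
      (L : ℝ≥0∞) ^ (Module.finrank ℝ E * ((σ - q) / q)) *
          (μ (ball z₀ R) * (⨍⁻ z in ball z₀ R, (g z : ℝ≥0∞) ^ q ∂μ) ^ (σ / q)) +
        absorptionFactor (Module.finrank ℝ E) b q σ *
          ∫⁻ z in ball z₀ (s + R / L), (g z : ℝ≥0∞) ^ σ ∂μ := by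
  set d := Module.finrank ℝ E
  have hq_pos : 0 < q := one_pos.trans hq
  have hLR : 0 < R / L := div_pos hR hL
  have h_int := measure_mul_setLAverage (μ := μ) (fun z ↦ (g z : ℝ≥0∞) ^ q)
    (measure_ball_lt_top (x := z₀) (r := R)).ne
  generalize ⨍⁻ z in ball z₀ R, (g z : ℝ≥0∞) ^ q ∂μ = Q at h_int ⊢
  rcases eq_or_ne Q ∞ with hQ_top | hQ_top
  · have hpos : μ (ball z₀ R) ≠ 0 := (measure_ball_pos μ z₀ hR).ne'
    have hL' : (L : ℝ≥0∞) ^ (d * ((σ - q) / q)) ≠ 0 := by simp [hL.ne']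
    have hσq : 0 < σ / q := by apply div_pos <;> linarith
    simp [hQ_top, hpos, hL', ENNReal.top_rpow_of_pos hσq]
  lift Q to ℝ≥0 using hQ_top
  set t : ℝ≥0 := L ^ (d / q) * Q ^ (1 / q)
  have ht_rpow {u : ℝ} (hu : 0 ≤ u) :
      (t : ℝ≥0∞) ^ u = (L : ℝ≥0∞) ^ (d * (u / q)) * (Q : ℝ≥0∞) ^ (u / q) := by
    rw [coe_rpow_mul_rpow_rpow _ _ (by positivity) (by positivity) hu, div_mul_eq_mul_div,
      mul_div_assoc, one_div_mul_eq_div]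
  have h_sub : ball z₀ (s + R / L) ⊆ ball z₀ R := ball_subset_ball hs
  have h_mono : ∫⁻ z in ball z₀ (s + R / L), (g z : ℝ≥0∞) ^ q ∂μ ≤ μ (ball z₀ R) * Q :=
    (lintegral_mono_set h_sub).trans_eq h_int.symm
  have ht : (t : ℝ≥0∞) ^ q * μ (ball z₀ (s + R / L - s)) = μ (ball z₀ R) * Q := by
    have h_ball := addHaar_ball_mul_measure μ z₀ z₀ (NNReal.coe_pos.2 hL) (R / L)
    rw [mul_div_cancel₀ _ (NNReal.coe_ne_zero.2 hL.ne'), ENNReal.ofReal_coe_nnreal] at h_ball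
    rw [ht_rpow hq_pos.le, div_self hq_pos.ne', mul_one, ENNReal.rpow_natCast, ENNReal.rpow_one,
      add_sub_cancel_left, h_ball]
    ring
  have ht' : (t : ℝ≥0∞) ^ (σ - q) * (μ (ball z₀ R) * Q) =
      (L : ℝ≥0∞) ^ (d * ((σ - q) / q)) * (μ (ball z₀ R) * (Q : ℝ≥0∞) ^ (σ / q)) := by
    rw [ht_rpow (sub_pos.2 hqσ).le, ← ennreal_rpow_sub_one_mul_self ((one_le_div hq_pos).2 hqσ.le),
      div_sub_one hq_pos.ne']
    ring
  grw [lintegral_rpow_ball_le hq hqσ hg (hgc.mono h_sub) (h.mono h_sub)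
    (lt_add_of_pos_right s hLR) (h_mono.trans_eq ht.symm), h_mono, ht']

lemma lintegral_rpow_ball_le_of_absorptionFactor_le {z₀ : E} {r σ : ℝ} (hq : 1 < q) (hqσ : q < σ)
    (hg : Measurable g) (hgc : ContinuousOn g (ball z₀ (2 * r)))
    (h : WeakReverseHolder μ q b g (ball z₀ (2 * r))) (hr : 0 < r)
    (hθ : 2 ^ (Module.finrank ℝ E * ((σ - q) / q)) *
      absorptionFactor (Module.finrank ℝ E) b q σ ≤ 2⁻¹) :
    ∫⁻ z in ball z₀ r, (g z : ℝ≥0∞) ^ σ ∂μ ≤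
      2 * (8 ^ (Module.finrank ℝ E * ((σ - q) / q)) * (μ (ball z₀ (2 * r)) *
        (⨍⁻ z in ball z₀ (2 * r), (g z : ℝ≥0∞) ^ q ∂μ) ^ (σ / q))) := by
  set κ : ℝ := Module.finrank ℝ E * ((σ - q) / q)
  have hκ : 0 ≤ κ := by
    have := sub_pos.2 hqσ
    positivity
  let radius (n : ℕ) : ℝ := r * (3 / 2 - (1 / 2) ^ n / 2)
  have radius_zero : radius 0 = r := by norm_num [radius]
  have radius_le (n : ℕ) : radius n ≤ 3 / 2 * r := by
    have : 0 ≤ r * ((1 / 2) ^ n / 2) := by positivity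
    simp only [radius]
    linarith
  have radius_succ (n : ℕ) : radius n + 2 * r / (8 * 2 ^ n : ℝ≥0) = radius (n + 1) := by
    simp only [radius, one_div, inv_pow]
    push_cast
    field_simp
    ring
  have coe_rpow (n : ℕ) : ((8 * 2 ^ n : ℝ≥0) : ℝ≥0∞) ^ κ = 8 ^ κ * (2 ^ κ) ^ n := by
    push_cast
    rw [ENNReal.mul_rpow_of_nonneg _ _ hκ, ← ENNReal.rpow_natCast_mul, mul_comm _ κ,
      ENNReal.rpow_mul_natCast]
  have h_bdd : ∫⁻ z in closedBall z₀ (3 / 2 * r), (g z : ℝ≥0∞) ^ σ ∂μ < ∞ :=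
    setLIntegral_rpow_lt_top_of_isCompact (isCompact_closedBall _ _)
      (hgc.mono (closedBall_subset_ball (by linarith))) (by linarith)
  conv_lhs => rw [← radius_zero]
  refine le_two_mul_of_le_mul_pow_add (γ := 2 ^ κ) h_bdd.ne
    (X := fun n ↦ ∫⁻ z in ball z₀ (radius n), (g z : ℝ≥0∞) ^ σ ∂μ)
    (fun n ↦ lintegral_mono_set (ball_subset_closedBall.trans
      (closedBall_subset_closedBall (radius_le n))))
    (ENNReal.one_rpow κ ▸ ENNReal.rpow_le_rpow one_le_two hκ)
    (ENNReal.rpow_ne_top_of_nonneg hκ ENNReal.ofNat_ne_top) hθ fun n ↦ ?_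
  have h_step := h.lintegral_rpow_ball_le_add hq hqσ hg hgc (L := 8 * 2 ^ n) (s := radius n)
    (by positivity) (by positivity)
    (by rw [radius_succ]; exact (radius_le _).trans (by linarith))
  rwa [radius_succ, coe_rpow, mul_right_comm] at h_step

lemma setLAverage_rpow_le {z₀ : E} {r σ : ℝ} (hq : 1 < q) (hqσ : q < σ)
    (hg : Measurable g) (hgc : ContinuousOn g (ball z₀ (2 * r)))
    (h : WeakReverseHolder μ q b g (ball z₀ (2 * r))) (hr : 0 < r)
    (hθ : 2 ^ (Module.finrank ℝ E * ((σ - q) / q)) *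
      absorptionFactor (Module.finrank ℝ E) b q σ ≤ 2⁻¹) :
    ⨍⁻ z in ball z₀ r, (g z : ℝ≥0∞) ^ σ ∂μ ≤
      2 * 2 ^ Module.finrank ℝ E * 8 ^ (Module.finrank ℝ E * ((σ - q) / q)) *
        (⨍⁻ z in ball z₀ (2 * r), (g z : ℝ≥0∞) ^ q ∂μ) ^ (σ / q) := by
  rw [setLAverage_eq]
  refine ENNReal.div_le_of_le_mul
    ((h.lintegral_rpow_ball_le_of_absorptionFactor_le hq hqσ hg hgc hr hθ).trans_eq ?_)
  rw [addHaar_ball_mul_measure μ z₀ z₀ two_pos, ENNReal.ofReal_ofNat]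
  ring

end WeakReverseHolder

end ReverseHolder

section MaximumPrinciple

open Filter Topology

lemma map_nhds_eq_of_det_fderiv_ne_zero {E : Type*} [NormedAddCommGroup E] [NormedSpace ℝ E]
    [FiniteDimensional ℝ E] {f : E → E} {x : E} (hf : ContDiffAt ℝ 1 f x)
    (hdet : (fderiv ℝ f x).det ≠ 0) : map f (𝓝 x) = 𝓝 (f x) := by
  have := FiniteDimensional.complete ℝ E
  have hstrict := hf.hasStrictFDerivAt one_ne_zero
  rw [← ContinuousLinearMap.coe_toContinuousLinearEquivOfDetNeZero _ hdet] at hstrict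
  exact hstrict.map_nhds_eq_of_equiv

lemma mapsTo_closedBall_of_frontier {X F : Type*} [TopologicalSpace X] [NormedAddCommGroup F]
    [NormedSpace ℝ F] [Nontrivial F] {f : X → F} {C : Set X} (hC : IsCompact C)
    (hf : ContinuousOn f C) (hopen : ∀ x ∈ interior C, 𝓝 (f x) ≤ map f (𝓝 x)) {w : F} {R : ℝ}
    (hR : Set.MapsTo f (frontier C) (closedBall w R)) : Set.MapsTo f C (closedBall w R) := by
  intro y hy
  obtain ⟨m, hm, hmax⟩ := hC.exists_isMaxOn ⟨y, hy⟩
    (f := fun x ↦ dist (f x) w) ((continuous_id.dist continuous_const).comp_continuousOn hf)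
  suffices hm_frontier : m ∈ frontier C from
    mem_closedBall.2 ((hmax hy).trans (hR hm_frontier))
  refine ⟨subset_closure hm, fun hm_int ↦ ?_⟩
  have h_nhds : closedBall w (dist (f m) w) ∈ 𝓝 (f m) :=
    hopen m hm_int (mem_map.2 (mem_of_superset (mem_interior_iff_mem_nhds.1 hm_int) hmax))
  rw [← mem_interior_iff_mem_nhds, interior_closedBall'] at h_nhds
  exact lt_irrefl _ (mem_ball.1 h_nhds)

end MaximumPrinciple

section LengthArea

lemma exists_mem_Icc_circleMap_eq {x p : ℂ} {s : ℝ} (hp : p ∈ sphere x s) :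
    ∃ θ ∈ Set.Icc (-π) π, circleMap x s θ = p := by
  refine ⟨(p - x).arg, ⟨(Complex.neg_pi_lt_arg _).le, Complex.arg_le_pi _⟩, ?_⟩
  rw [circleMap, ← mem_sphere_iff_norm.1 hp, Complex.norm_mul_exp_arg_mul_I, add_sub_cancel]

lemma edist_le_lintegral_enorm_fderiv_circleMap {F : Type*} [NormedAddCommGroup F]
    [NormedSpace ℝ F] {f : ℂ → F} {x : ℂ} {s : ℝ} (hs : 0 ≤ s)
    (hf : ∀ z ∈ sphere x s, ContDiffAt ℝ 1 f z) {p p' : ℂ} (hp : p ∈ sphere x s)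
    (hp' : p' ∈ sphere x s) :
    edist (f p) (f p') ≤
      ∫⁻ θ in Set.Ioo (-π) π, ENNReal.ofReal s * ‖fderiv ℝ f (circleMap x s θ)‖ₑ := by
  obtain ⟨θ, hθ, rfl⟩ := exists_mem_Icc_circleMap_eq hp
  obtain ⟨θ', hθ', rfl⟩ := exists_mem_Icc_circleMap_eq hp'
  wlog hle : θ ≤ θ' generalizing θ θ'
  · rw [edist_comm]
    exact this θ' hθ' hp' θ hθ hp (le_of_not_ge hle)
  have hfc (t : ℝ) : ContDiffAt ℝ 1 f (circleMap x s t) := hf _ (circleMap_mem_sphere x hs t)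
  have hcomp : ContDiff ℝ 1 (f ∘ circleMap x s) := contDiff_iff_contDiffAt.2 fun t ↦
    (hfc t).comp t (contDiff_circleMap x s).contDiffAt
  have hderiv (t : ℝ) :
      ‖deriv (f ∘ circleMap x s) t‖ₑ ≤ ENNReal.ofReal s * ‖fderiv ℝ f (circleMap x s t)‖ₑ := by
    rw [(((hfc t).differentiableAt one_ne_zero).hasFDerivAt.comp_hasDerivAt t
      (hasDerivAt_circleMap x s t)).deriv, mul_comm]
    refine ((fderiv ℝ f (circleMap x s t)).le_opENorm _).trans_eq ?_
    rw [enorm_mul, ← ofReal_norm Complex.I, ← ofReal_norm (circleMap 0 s t), Complex.norm_I,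
      norm_circleMap_zero, abs_of_nonneg hs, ENNReal.ofReal_one, one_mul, mul_comm]
  calc edist (f (circleMap x s θ)) (f (circleMap x s θ'))
      = ‖(f ∘ circleMap x s) θ' - (f ∘ circleMap x s) θ‖ₑ := by
        rw [edist_comm, edist_eq_enorm_sub, Function.comp, Function.comp]
    _ ≤ ∫⁻ t in Set.Icc θ θ', ‖deriv (f ∘ circleMap x s) t‖ₑ :=
        enorm_sub_le_lintegral_deriv_of_contDiffOn_Icc hcomp.contDiffOn hle
    _ = ∫⁻ t in Set.Ioo θ θ', ‖deriv (f ∘ circleMap x s) t‖ₑ := by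
        rw [restrict_Ioo_eq_restrict_Icc]
    _ ≤ ∫⁻ t in Set.Ioo (-π) π, ENNReal.ofReal s * ‖fderiv ℝ f (circleMap x s t)‖ₑ :=
        lintegral_mono' (Measure.restrict_mono (Set.Ioo_subset_Ioo hθ.1 hθ'.2) le_rfl) hderiv

lemma volume_image_closedBall_le {f : ℂ → ℂ} {x : ℂ} {s : ℝ} (hs : 0 < s)
    (hf : ∀ z ∈ closedBall x s, ContDiffAt ℝ 1 f z)
    (hdet : ∀ z ∈ ball x s, (fderiv ℝ f z).det ≠ 0) :
    volume (f '' closedBall x s) ≤ NNReal.pi *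
      (∫⁻ θ in Set.Ioo (-π) π, ENNReal.ofReal s * ‖fderiv ℝ f (circleMap x s θ)‖ₑ) ^ 2 := by
  have h_length {p p' : ℂ} := edist_le_lintegral_enorm_fderiv_circleMap (p := p) (p' := p') hs.le
    fun z hz ↦ hf z (sphere_subset_closedBall hz)
  set L := ∫⁻ θ in Set.Ioo (-π) π, ENNReal.ofReal s * ‖fderiv ℝ f (circleMap x s θ)‖ₑ
  rcases eq_or_ne L ∞ with hL | hL
  · simp [hL, ENNReal.mul_top, NNReal.pi_ne_zero]
  have h_sub : f '' closedBall x s ⊆ closedBall (f (circleMap x s 0)) L.toReal := by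
    refine Set.image_subset_iff.2 (mapsTo_closedBall_of_frontier (isCompact_closedBall x s)
      (fun z hz ↦ (hf z hz).continuousAt.continuousWithinAt) (fun z hz ↦ ?_) fun z hz ↦ ?_)
    · rw [interior_closedBall x hs.ne'] at hz
      exact (map_nhds_eq_of_det_fderiv_ne_zero (hf z (ball_subset_closedBall hz)) (hdet z hz)).ge
    · rw [frontier_closedBall x hs.ne'] at hz
      rw [mem_closedBall, dist_edist]
      exact ENNReal.toReal_mono hL (h_length hz (circleMap_mem_sphere x hs.le 0))
  grw [h_sub, Complex.volume_closedBall, ENNReal.ofReal_toReal hL, mul_comm]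

lemma lintegral_ball_eq_lintegral_circleMap {G : ℂ → ℝ≥0∞} (hG : Measurable G) (x : ℂ) (R : ℝ) :
    ∫⁻ z in ball x R, G z = ∫⁻ s in Set.Ioo 0 R,
      ∫⁻ θ in Set.Ioo (-π) π, ENNReal.ofReal s * G (circleMap x s θ) := by
  have h_polar (p : ℝ × ℝ) : x + Complex.polarCoord.symm p = circleMap x p.1 p.2 := by
    simp [circleMap, Complex.polarCoord_symm_apply, Complex.exp_mul_I]
  have h_ball (p : ℝ × ℝ) (hp : p ∈ polarCoord.target) :
      ENNReal.ofReal p.1 * (ball x R).indicator G (circleMap x p.1 p.2) =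
        (Prod.fst ⁻¹' Set.Iio R).indicator
          (fun p ↦ ENNReal.ofReal p.1 * G (circleMap x p.1 p.2)) p := by
    have hp_mem : circleMap x p.1 p.2 ∈ ball x R ↔ p ∈ Prod.fst ⁻¹' Set.Iio R := by
      rw [mem_ball, mem_sphere.1 (circleMap_mem_sphere x hp.1.le p.2), Set.mem_preimage,
        Set.mem_Iio]
    by_cases hpR : p.1 < R <;> simp [Set.indicator, hp_mem, hpR]
  have h_inter : Prod.fst ⁻¹' Set.Iio R ∩ polarCoord.target = Set.Ioo 0 R ×ˢ Set.Ioo (-π) π := by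
    rw [polarCoord_target, Set.inter_comm, ← Set.prod_univ,
      Set.prod_inter_prod, Set.inter_univ, Set.Ioi_inter_Iio]
  have h_meas : Measurable fun p : ℝ × ℝ ↦ ENNReal.ofReal p.1 * G (circleMap x p.1 p.2) := by
    simp only [circleMap]
    fun_prop
  rw [← lintegral_indicator measurableSet_ball, ← lintegral_add_left_eq_self _ x,
    ← Complex.lintegral_comp_polarCoord_symm]
  simp_rw [h_polar, smul_eq_mul]
  rw [setLIntegral_congr_fun polarCoord.open_target.measurableSet h_ball,
    lintegral_indicator (measurable_fst measurableSet_Iio),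
    Measure.restrict_restrict (measurable_fst measurableSet_Iio), h_inter, Measure.volume_eq_prod,
    ← Measure.prod_restrict, lintegral_prod _ h_meas.aemeasurable]

lemma sq_mul_volume_image_ball_le {f : ℂ → ℂ} {x : ℂ} {ρ R : ℝ} (hρ : 0 ≤ ρ)
    (hf : ∀ z ∈ ball x R, ContDiffAt ℝ 1 f z) (hdet : ∀ z ∈ ball x R, (fderiv ℝ f z).det ≠ 0) :
    ENNReal.ofReal (R - ρ) ^ 2 * volume (f '' ball x ρ) ≤
      NNReal.pi * (∫⁻ z in ball x R, ‖fderiv ℝ f z‖ₑ) ^ 2 := by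
  set V := volume (f '' ball x ρ)
  have rpow_half_sq (a : ℝ≥0∞) : (a ^ (1 / 2 : ℝ)) ^ 2 = a := by
    rw [← ENNReal.rpow_two, ← ENNReal.rpow_mul]
    norm_num
  have h_circle (s : ℝ) (hs : s ∈ Set.Ioo ρ R) :
      V ^ (1 / 2 : ℝ) ≤ (NNReal.pi : ℝ≥0∞) ^ (1 / 2 : ℝ) * ∫⁻ θ in Set.Ioo (-π) π,
        ENNReal.ofReal s * ‖fderiv ℝ f (circleMap x s θ)‖ₑ := by
    rw [← ENNReal.pow_le_pow_left_iff two_ne_zero, mul_pow, rpow_half_sq, rpow_half_sq]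
    have h_sub : closedBall x s ⊆ ball x R := closedBall_subset_ball hs.2
    refine le_trans (measure_mono (Set.image_mono ?_)) (volume_image_closedBall_le
      (hρ.trans_lt hs.1) (fun z hz ↦ hf z (h_sub hz))
      fun z hz ↦ hdet z (h_sub (ball_subset_closedBall hz)))
    exact ball_subset_closedBall.trans (closedBall_subset_closedBall hs.1.le)
  have h_radii : ENNReal.ofReal (R - ρ) * V ^ (1 / 2 : ℝ) ≤
      (NNReal.pi : ℝ≥0∞) ^ (1 / 2 : ℝ) * ∫⁻ z in ball x R, ‖fderiv ℝ f z‖ₑ := by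
    rw [lintegral_ball_eq_lintegral_circleMap (measurable_fderiv ℝ f).enorm,
      ← lintegral_const_mul' _ _ (by finiteness)]
    calc ENNReal.ofReal (R - ρ) * V ^ (1 / 2 : ℝ)
        = ∫⁻ _ in Set.Ioo ρ R, V ^ (1 / 2 : ℝ) := by
          rw [setLIntegral_const, Real.volume_Ioo, mul_comm]
      _ ≤ _ := setLIntegral_mono' measurableSet_Ioo h_circle
      _ ≤ _ := lintegral_mono_set (Set.Ioo_subset_Ioo_left hρ)
  calc ENNReal.ofReal (R - ρ) ^ 2 * V = (ENNReal.ofReal (R - ρ) * V ^ (1 / 2 : ℝ)) ^ 2 := by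
        rw [mul_pow, rpow_half_sq]
    _ ≤ ((NNReal.pi : ℝ≥0∞) ^ (1 / 2 : ℝ) * ∫⁻ z in ball x R, ‖fderiv ℝ f z‖ₑ) ^ 2 := by gcongr
    _ = _ := by rw [mul_pow, rpow_half_sq]

end LengthArea

section Quasiconformal

lemma lintegral_enorm_fderiv_pow_le {E : Type*} [NormedAddCommGroup E] [NormedSpace ℝ E]
    [FiniteDimensional ℝ E] [MeasurableSpace E] [BorelSpace E] (μ : Measure E)
    [μ.IsAddHaarMeasure] {f : E → E} {s : Set E} {K : ℝ} {n : ℕ} (hs : MeasurableSet s)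
    (hf : ∀ x ∈ s, DifferentiableAt ℝ f x) (hinj : Set.InjOn f s)
    (hK : ∀ x ∈ s, ‖fderiv ℝ f x‖ ^ n ≤ K * |(fderiv ℝ f x).det|) :
    ∫⁻ x in s, ‖fderiv ℝ f x‖ₑ ^ n ∂μ ≤ ENNReal.ofReal K * μ (f '' s) := by
  rw [← lintegral_abs_det_fderiv_eq_addHaar_image μ hs
    (fun x hx ↦ (hf x hx).hasFDerivAt.hasFDerivWithinAt) hinj,
    ← lintegral_const_mul' _ _ ENNReal.ofReal_ne_top]
  refine setLIntegral_mono' hs fun x hx ↦ ?_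
  rw [← ofReal_norm, ← ENNReal.ofReal_pow (norm_nonneg _), ← ENNReal.ofReal_mul' (abs_nonneg _)]
  exact ENNReal.ofReal_le_ofReal (hK x hx)

lemma IsC1QCHomeoOn.continuousOn_fderiv {K : ℝ} {φ : ℂ → ℂ} {Ω Ω' : Set ℂ}
    (hφ : IsC1QCHomeoOn K φ Ω Ω') : ContinuousOn (fderiv ℝ φ) Ω := by
  obtain ⟨hΩ, -, -, -, hdiff, -⟩ := hφ
  exact hdiff.continuousOn_fderiv_of_isOpen hΩ le_rfl

lemma IsC1QCHomeoOn.sq_mul_lintegral_sq_le {K : ℝ} {φ : ℂ → ℂ} {Ω Ω' : Set ℂ}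
    (hφ : IsC1QCHomeoOn K φ Ω Ω') {x : ℂ} {ρ R : ℝ} (hρ : 0 ≤ ρ) (hρR : ρ ≤ R)
    (hR : ball x R ⊆ Ω) :
    ENNReal.ofReal (R - ρ) ^ 2 * ∫⁻ z in ball x ρ, ‖fderiv ℝ φ z‖ₑ ^ 2 ≤
      ENNReal.ofReal K * (NNReal.pi * (∫⁻ z in ball x R, ‖fderiv ℝ φ z‖ₑ) ^ 2) := by
  obtain ⟨hΩ, -, -, -, hdiff, hinj, -, hdistortion⟩ := hφ
  have hsub : ball x ρ ⊆ Ω := (ball_subset_ball hρR).trans hR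
  have hdiffAt (z : ℂ) (hz : z ∈ Ω) : ContDiffAt ℝ 1 φ z := hdiff.contDiffAt (hΩ.mem_nhds hz)
  have h_area : ∫⁻ z in ball x ρ, ‖fderiv ℝ φ z‖ₑ ^ 2 ≤
      ENNReal.ofReal K * volume (φ '' ball x ρ) :=
    lintegral_enorm_fderiv_pow_le volume measurableSet_ball
      (fun z hz ↦ (hdiffAt z (hsub hz)).differentiableAt one_ne_zero) (hinj.mono hsub) fun z hz ↦
      (hdistortion z (hsub hz)).2.trans_eq (by rw [abs_of_pos (hdistortion z (hsub hz)).1])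
  have h_length := sq_mul_volume_image_ball_le hρ (fun z hz ↦ hdiffAt z (hR hz))
    fun z hz ↦ (hdistortion z (hR hz)).1.ne'
  grw [h_area, mul_left_comm, h_length]

lemma IsC1QCHomeoOn.weakReverseHolder {K : ℝ} {φ : ℂ → ℂ} {Ω Ω' : Set ℂ}
    (hφ : IsC1QCHomeoOn K φ Ω Ω') :
    WeakReverseHolder volume 2 (4 * NNReal.pi * NNReal.sqrt K.toNNReal)
      (fun z ↦ ‖fderiv ℝ φ z‖₊) Ω := by
  intro x ρ hρ hΩ
  have h_energy := hφ.sq_mul_lintegral_sq_le hρ.le (by linarith) hΩ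
  lift ρ to ℝ≥0 using hρ.le
  replace hρ : ρ ≠ 0 := (NNReal.coe_pos.1 hρ).ne'
  have hπ : NNReal.pi ≠ 0 := NNReal.pi_ne_zero
  rw [two_mul, add_sub_cancel_right, ← two_mul] at h_energy
  simp only [← enorm_eq_nnnorm, setLAverage_eq, Complex.volume_ball, ENNReal.rpow_two,
    ENNReal.ofReal_mul zero_le_two, ENNReal.ofReal_coe_nnreal, ENNReal.ofReal_ofNat] at h_energy ⊢
  generalize ∫⁻ z in ball x ρ, ‖fderiv ℝ φ z‖ₑ ^ 2 = I at h_energy ⊢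
  generalize ∫⁻ z in ball x (2 * ρ), ‖fderiv ℝ φ z‖ₑ = J at h_energy ⊢
  set k := K.toNNReal
  have h_left : I / (ρ ^ 2 * NNReal.pi) = (1 / (ρ ^ 4 * NNReal.pi) : ℝ≥0) * (ρ ^ 2 * I) := by
    rw [← mul_assoc, ENNReal.div_eq_inv_mul]
    norm_cast
    rw [← ENNReal.coe_inv (by positivity)]
    congr 2
    field_simp
  have h_right : (4 * NNReal.pi * NNReal.sqrt k : ℝ≥0) * (J / ((2 * ρ) ^ 2 * NNReal.pi)) =
      (NNReal.sqrt k / ρ ^ 2 : ℝ≥0) * J := by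
    rw [← mul_div_assoc, ENNReal.mul_div_right_comm]
    norm_cast
    rw [← ENNReal.coe_div (by positivity)]
    congr 2
    field_simp
    ring
  rw [h_left, h_right]
  grw [h_energy]
  refine le_of_eq ?_
  change _ * ((k : ℝ≥0∞) * _) = _
  rw [mul_pow, ← mul_assoc, ← mul_assoc]
  norm_cast
  rw [div_pow, NNReal.sq_sqrt]
  congr 2
  field_simp

end Quasiconformal

section Constants

lemma two_rpow_mul_rpow_mul_div_le {K σ : ℝ} (hK : 1 ≤ K) (hσ : 2 < σ)
    (hν : (10 : ℝ) ^ (4 * σ) * ((σ - 2) / (σ - 1)) * (24 * π ^ 2 * K) ^ σ < 1) :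
    2 ^ (σ - 2) * (4 ^ 2 * (2 * (4 * π * √K)) ^ σ * ((σ - 2) / (σ - 1))) ≤ 2⁻¹ := by
  have hκ : 0 < (σ - 2) / (σ - 1) := div_pos (by linarith) (by linarith)
  have h_base : 2 * (2 * (4 * π * √K)) ≤ 24 * π ^ 2 * K := by
    have h_sqrt : √K ≤ K := Real.sqrt_le_iff.2 ⟨by positivity, le_self_pow₀ hK two_ne_zero⟩
    calc 2 * (2 * (4 * π * √K)) = 16 * π * √K := by ring
      _ ≤ 24 * π ^ 2 * K := by
        gcongr
        · norm_num
        · exact le_self_pow₀ (by linarith [pi_gt_three]) two_ne_zero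
  have h_ten : (10 : ℝ) ^ 8 ≤ 10 ^ (4 * σ) := by
    rw [← Real.rpow_natCast]
    exact Real.rpow_le_rpow_of_exponent_le (by norm_num) (by push_cast; linarith)
  calc 2 ^ (σ - 2) * (4 ^ 2 * (2 * (4 * π * √K)) ^ σ * ((σ - 2) / (σ - 1)))
      ≤ 2 ^ σ * (4 ^ 2 * (2 * (4 * π * √K)) ^ σ * ((σ - 2) / (σ - 1))) := by
        gcongr
        · norm_num
        · linarith
    _ = 4 ^ 2 * ((σ - 2) / (σ - 1)) * (2 * (2 * (4 * π * √K))) ^ σ := by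
        rw [Real.mul_rpow (x := 2) (y := 2 * (4 * π * √K)) zero_le_two (by positivity)]
        ring
    _ ≤ 4 ^ 2 * ((σ - 2) / (σ - 1)) * (24 * π ^ 2 * K) ^ σ := by gcongr
    _ ≤ 2⁻¹ * (10 ^ 8 * ((σ - 2) / (σ - 1)) * (24 * π ^ 2 * K) ^ σ) := by
        have : 0 ≤ (σ - 2) / (σ - 1) * (24 * π ^ 2 * K) ^ σ := by positivity
        linarith
    _ ≤ 2⁻¹ * 1 := by
        gcongr
        refine le_trans ?_ hν.le
        gcongr
    _ = 2⁻¹ := mul_one _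

lemma two_rpow_mul_absorptionFactor_le {K σ : ℝ} (hK : 1 ≤ K) (hσ : 2 < σ)
    (hν : (10 : ℝ) ^ (4 * σ) * ((σ - 2) / (σ - 1)) * (24 * π ^ 2 * K) ^ σ < 1) :
    2 ^ (σ - 2) * absorptionFactor 2 (4 * NNReal.pi * NNReal.sqrt K.toNNReal) 2 σ ≤ 2⁻¹ := by
  have h_coe : 2 * ((4 * NNReal.pi * NNReal.sqrt K.toNNReal : ℝ≥0) : ℝ≥0∞) =
      ENNReal.ofReal (2 * (4 * π * √K)) := by
    rw [ENNReal.ofReal_mul zero_le_two, ENNReal.ofReal_ofNat, ← ENNReal.ofReal_coe_nnreal]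
    simp [Real.coe_toNNReal K (zero_le_one.trans hK)]
  have h_pos : 0 < 2 * (4 * π * √K) := by positivity
  have hκ : 0 ≤ (σ - 2) / (σ - 1) := div_nonneg (by linarith) (by linarith)
  calc 2 ^ (σ - 2) * absorptionFactor 2 (4 * NNReal.pi * NNReal.sqrt K.toNNReal) 2 σ
      = ENNReal.ofReal
          (2 ^ (σ - 2) * (4 ^ 2 * (2 * (4 * π * √K)) ^ σ * ((σ - 2) / (σ - 1)))) := by
        rw [absorptionFactor, h_coe, ENNReal.ofReal_rpow_of_pos h_pos,
          ENNReal.ofReal_mul (by positivity), ENNReal.ofReal_mul' hκ,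
          ENNReal.ofReal_mul (by positivity), ← ENNReal.ofReal_rpow_of_pos two_pos,
          ENNReal.ofReal_pow (by norm_num), ENNReal.ofReal_ofNat, ENNReal.ofReal_ofNat]
    _ ≤ ENNReal.ofReal 2⁻¹ :=
        ENNReal.ofReal_le_ofReal (two_rpow_mul_rpow_mul_div_le hK hσ hν)
    _ = 2⁻¹ := by rw [ENNReal.ofReal_inv_of_pos two_pos, ENNReal.ofReal_ofNat]

lemma two_mul_two_sq_mul_eight_rpow_rpow_le {σ : ℝ} (hσ : 0 < σ) :
    (2 * 2 ^ 2 * 8 ^ (σ - 2) : ℝ≥0∞) ^ (1 / σ) ≤ 8 := by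
  rw [one_div, ENNReal.rpow_inv_le_iff hσ]
  calc (2 * 2 ^ 2 * 8 ^ (σ - 2) : ℝ≥0∞) = 8 ^ (1 + (σ - 2)) := by
        rw [ENNReal.rpow_add _ _ (by norm_num) (by norm_num), ENNReal.rpow_one]
        norm_num
    _ ≤ 8 ^ σ := ENNReal.rpow_le_rpow_of_exponent_le (by norm_num) (by linarith)

lemma eight_le_ofReal_ten_pow_six_div_rpow {σ ν : ℝ} (hσ : 1 < σ) (hν₀ : 0 ≤ ν) (hν : ν < 1) :
    8 ≤ ENNReal.ofReal (10 ^ 6 / ((σ - 1) * (1 - ν)) ^ (1 / σ)) := by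
  have hσ' : 0 < σ - 1 := sub_pos.2 hσ
  have hν' : 0 < 1 - ν := sub_pos.2 hν
  have h_den : ((σ - 1) * (1 - ν)) ^ (1 / σ) ≤ 2 := by
    rw [one_div, Real.rpow_inv_le_iff_of_pos (by positivity) zero_le_two (one_pos.trans hσ)]
    calc (σ - 1) * (1 - ν) ≤ σ - 1 := mul_le_of_le_one_right hσ'.le (by linarith)
      _ ≤ 1 + σ * 1 := by linarith
      _ ≤ (1 + 1) ^ σ := one_add_mul_self_le_rpow_one_add (by norm_num) hσ.le
      _ = 2 ^ σ := by norm_num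
  rw [← ENNReal.ofReal_ofNat 8]
  refine ENNReal.ofReal_le_ofReal ?_
  rw [le_div_iff₀ (Real.rpow_pos_of_pos (mul_pos hσ' hν') _)]
  linarith

end Constants

/-- Weak (inverse) Hölder inequality with exponent `σ > 2` for derivatives of a
`C¹` `K`-quasiconformal homeomorphism `φ : Ω → Ω′`: if `D(z₀,2r) ⊂ Ω` and
`ν = 10^{4σ}·((σ−2)/(σ−1))·(24π²K)^σ < 1`, then
`((1/|D(z₀,r)|)∬_{D(z₀,r)} ‖Dφ‖^σ)^{1/σ}
  ≤ C_σ ((1/|D(z₀,2r)|)∬_{D(z₀,2r)} ‖Dφ‖²)^{1/2}`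
with `C_σ = 10⁶/[(σ−1)(1−ν)]^{1/σ}`. -/
theorem weak_holder_inequality_sigma
    (K : ℝ) (hK : 1 ≤ K) (Ω Ω' : Set ℂ) (φ : ℂ → ℂ)
    (hφ : IsC1QCHomeoOn K φ Ω Ω')
    (z₀ : ℂ) (r : ℝ) (hr : 0 < r) (hball : Metric.ball z₀ (2 * r) ⊆ Ω)
    (σ : ℝ) (hσ : 2 < σ)
    (hν : (10 : ℝ) ^ (4 * σ) * ((σ - 2) / (σ - 1)) * (24 * π ^ 2 * K) ^ σ < 1) :
    ((volume (Metric.ball z₀ r))⁻¹ *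
        ∫⁻ z in Metric.ball z₀ r, (‖fderiv ℝ φ z‖₊ : ℝ≥0∞) ^ σ) ^ (1/σ)
      ≤ ENNReal.ofReal (10 ^ 6 /
            ((σ - 1) * (1 - (10 : ℝ) ^ (4 * σ) * ((σ - 2) / (σ - 1)) * (24 * π ^ 2 * K) ^ σ))
              ^ (1/σ)) *
          ((volume (Metric.ball z₀ (2 * r)))⁻¹ *
            ∫⁻ z in Metric.ball z₀ (2 * r), (‖fderiv ℝ φ z‖₊ : ℝ≥0∞) ^ 2) ^ (1/2 : ℝ) := by
  have hν₀ : 0 ≤ (10 : ℝ) ^ (4 * σ) * ((σ - 2) / (σ - 1)) * (24 * π ^ 2 * K) ^ σ := by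
    have : 0 ≤ (σ - 2) / (σ - 1) := div_nonneg (by linarith) (by linarith)
    positivity
  have h_exponent : Module.finrank ℝ ℂ * ((σ - 2) / 2) = σ - 2 := by
    rw [Complex.finrank_real_complex, Nat.cast_ofNat, mul_div_cancel₀ _ two_ne_zero]
  have h_gehring := (hφ.weakReverseHolder.mono hball).setLAverage_rpow_le one_lt_two hσ
    (measurable_fderiv ℝ φ).nnnorm (hφ.continuousOn_fderiv.mono hball).nnnorm hr <| by
      rw [h_exponent, Complex.finrank_real_complex]
      exact two_rpow_mul_absorptionFactor_le hK hσ hν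
  rw [h_exponent, Complex.finrank_real_complex] at h_gehring
  simp_rw [← ENNReal.rpow_two, ← ENNReal.div_eq_inv_mul, ← setLAverage_eq]
  have h_const := (two_mul_two_sq_mul_eight_rpow_rpow_le (two_pos.trans hσ)).trans
    (eight_le_ofReal_ten_pow_six_div_rpow (one_lt_two.trans hσ) hν₀ hν)
  grw [h_gehring, ENNReal.mul_rpow_of_nonneg _ _ (by positivity), h_const, ← ENNReal.rpow_mul,
    show σ / 2 * (1 / σ) = 1 / 2 by field_simp]
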